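/- arXiv:1709.02870 — 3 statements merged into one kernel-verified Lean document; each statement's English description precedes it below -/
import Mathlib

section
/- Suppose the height of J^{0}(M) equals d ≥ 0 and that for every k > d the height of J^{-k}(M) is strictly greater than k. Then every minimal prime ideal over J^{0}(M) has height exactly d; equivalently, the jump locus V^{0}(M) is pure-dimensional of codimension d. -/
/-!
Context: `R` is a Noetherian Cohen–Macaulay integral domain and `M` is a nonzero finitely
generated `R`-module with a finite free resolution
`0 → F^{-l} → ⋯ → F^{-1} → F^{0} → M → 0`.
We encode the resolution by the ranks `r i` of the free modules `F^{-i}` (with `r i = 0` for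
`i > l`) and by matrices `D i` representing the differentials `∂^{-(i+1)} : F^{-(i+1)} → F^{-i}`
(so for `i ≥ 1` the differential `∂^{-i}` is the matrix `D (i-1)`), together with a surjection
`π : F^0 → M` with `ker π = im ∂^{-1}` and exactness `ker ∂^{-(i+1)} = im ∂^{-(i+2)}`
for all `i ≥ 0`.
-/

/-- The ideal of `R` generated by all `k × k` minors of the matrix `A`.  For `k = 0` this is the
unit ideal, and it is the zero ideal when `k` exceeds the number of rows or columns. -/
noncomputable def minorsIdeal {R : Type*} [CommRing R] {m n : Type*} [Fintype m] [Fintype n]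
    (k : ℕ) (A : Matrix m n R) : Ideal R :=
  Ideal.span {x : R | ∃ (f : Fin k → m) (g : Fin k → n), x = (A.submatrix f g).det}

/-- The rank of a matrix over a domain: the largest `k` such that some `k × k` minor of `A`
is nonzero. -/
noncomputable def detRank {R : Type*} [CommRing R] {m n : Type*} [Fintype m] [Fintype n]
    (A : Matrix m n R) : ℕ :=
  sSup {k : ℕ | minorsIdeal k A ≠ ⊥}

/-- The determinantal (fitting-type) ideal `I_{rank A}(A)` of a matrix `A`; applied to the matrix
of `∂^{-i}` it gives the degree `-i` fitting ideal `I^{-i}(M)`. -/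
noncomputable def fittingIdealOf {R : Type*} [CommRing R] {m n : Type*} [Fintype m] [Fintype n]
    (A : Matrix m n R) : Ideal R :=
  minorsIdeal (detRank A) A

/-- The degree `-i` jumping ideal `J^{-i}(M) = I_{rank F^{-i}}(∂^{-i-1} ⊕ ∂^{-i})` of a free
resolution with ranks `r i = rank F^{-i}` and differentials `D i = ∂^{-(i+1)}`.
For `i = 0` the map `∂^0` is zero and `F^1 = 0`, so the block matrix of `∂^{-1} ⊕ ∂^0` has the
same minors of size `r 0` as the matrix of `∂^{-1}` alone. -/
noncomputable def jumpIdeal {R : Type*} [CommRing R] (r : ℕ → ℕ)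
    (D : ∀ i : ℕ, Matrix (Fin (r i)) (Fin (r (i + 1))) R) : ℕ → Ideal R
  | 0 => minorsIdeal (r 0) (D 0)
  | (i + 1) => minorsIdeal (r (i + 1)) (Matrix.fromBlocks (D (i + 1)) 0 0 (D i))

/-- The height (codimension) of an ideal: the infimum of `Order.height` (in the prime spectrum
ordered by inclusion) over all primes containing it. -/
noncomputable def idealHeight (R : Type*) [CommRing R] (I : Ideal R) : ℕ∞ :=
  ⨅ (p : PrimeSpectrum R) (_ : I ≤ p.asIdeal), Order.height p

/-- The depth (grade) of an ideal `I` of `R`: the supremum of the lengths of regular sequences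
on `R` consisting of elements of `I`. -/
noncomputable def idealDepth (R : Type*) [CommRing R] (I : Ideal R) : ℕ∞ :=
  sSup {n : ℕ∞ | ∃ rs : List R, (rs.length : ℕ∞) = n ∧ (∀ x ∈ rs, x ∈ I) ∧
    RingTheory.Sequence.IsRegular R rs}

/-- A Noetherian ring is Cohen–Macaulay if and only if for every proper ideal its depth (grade)
equals its height (codimension); we take this characterization as the definition. -/
def IsCohenMacaulayRing (R : Type*) [CommRing R] : Prop :=
  ∀ I : Ideal R, I ≠ ⊤ → idealDepth R I = idealHeight R I

/-!
Let `p` be a minimal prime of `J^0(M)` of height `h`. Since `J^0(M)` is the zeroth Fitting ideal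
of `M`, it has the same radical as the annihilator, so `M_p` is a nonzero module of finite length
over the Cohen–Macaulay local ring `R_p`. By Auslander–Buchsbaum, `M_p` has projective dimension
`h`, so `Tor_h(M, κ(p)) ≠ 0`, which says exactly that `J^{-h}(M) ⊆ p`. Hence
`ht J^{-h}(M) ≤ h`, which the hypothesis forbids for `h > d`; and `h ≥ d` because `p ⊇ J^0(M)`.

The inclusion `J^{-h}(M) ⊆ p` (`jumpIdeal_le_of_mem_minimalPrimes`) is proved without localizing.
Suppose it fails, with `h = n + 1`. Then the resolution splits at the spot `-h` over the fraction
field of `R/p`, and the Cayley–Hamilton theorem yields `E` and `δ ∉ p` with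
`D n * E * D n = δ • D n` (`exists_quasiInverse`). So `δ` annihilates `Ext^n(R/p, coker (D n))`,
because `Ext^i(R/p, R^m) = 0` for `i ≤ n` by Rees' theorem. Dimension shifting along
`0 → coker D_{i+1} → F_i → coker D_i → 0` shows that `δ` annihilates `Hom(R/p, coker (D 0))`. But
`p` is an associated prime of `coker (D 0) ≅ M`, so `R/p` embeds there and `δ ∈ p`, a
contradiction.
-/

open CategoryTheory Abelian
open scoped Matrix

/-! ### Splitting a complex of matrices away from a prime -/

lemma rank_fromBlocks_diag_le {K : Type*} [Field K] {a b c d : ℕ}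
    (Q : Matrix (Fin a) (Fin b) K) (P : Matrix (Fin c) (Fin d) K) :
    (Matrix.fromBlocks Q 0 0 P).rank ≤ Q.rank + P.rank := by
  have h : Matrix.fromBlocks Q 0 0 P =
      Matrix.fromRows (1 : Matrix (Fin a) (Fin a) K) 0 * (Q * Matrix.fromCols (1 : Matrix (Fin b) (Fin b) K) (0 : Matrix (Fin b) (Fin d) K)) +
      Matrix.fromRows (0 : Matrix (Fin a) (Fin c) K) 1 * (P * Matrix.fromCols (0 : Matrix (Fin d) (Fin b) K) (1 : Matrix (Fin d) (Fin d) K)) := by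
    ext (i | i) (j | j) <;> simp [Matrix.mul_fromCols, Matrix.fromRows_mul]
  rw [h]
  refine le_trans ?_ (add_le_add (b := Q.rank) (d := P.rank)
    (a := (Matrix.fromRows (1 : Matrix (Fin a) (Fin a) K) (0 : Matrix (Fin c) (Fin a) K) *
      (Q * Matrix.fromCols (1 : Matrix (Fin b) (Fin b) K) (0 : Matrix (Fin b) (Fin d) K))).rank)
    (c := (Matrix.fromRows (0 : Matrix (Fin a) (Fin c) K) (1 : Matrix (Fin c) (Fin c) K) *
      (P * Matrix.fromCols (0 : Matrix (Fin d) (Fin b) K) (1 : Matrix (Fin d) (Fin d) K))).rank)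
    ?_ ?_)
  · rw [Matrix.rank, Matrix.mulVecLin_add]
    refine (Submodule.finrank_mono ?_).trans (Submodule.finrank_add_le_finrank_add_finrank _ _)
    exact LinearMap.range_add_le _ _
  · exact (Matrix.rank_mul_le_right _ _).trans (Matrix.rank_mul_le_left _ _)
  · exact (Matrix.rank_mul_le_right _ _).trans (Matrix.rank_mul_le_left _ _)

/-- If `P * Q = 0` over a field and the ranks are as large as possible, the complex
`K^c → K^b → K^a` is exact at `K^b`, and hence contractible there. -/
lemma exists_split_of_rank {K : Type*} [Field K] {a b c : ℕ}
    (P : Matrix (Fin a) (Fin b) K) (Q : Matrix (Fin b) (Fin c) K) (hPQ : P * Q = 0)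
    (hr : b ≤ Q.rank + P.rank) :
    ∃ (A : Matrix (Fin c) (Fin b) K) (B : Matrix (Fin b) (Fin a) K), Q * A + B * P = 1 := by
  have hrange : LinearMap.range Q.mulVecLin = LinearMap.ker P.mulVecLin := by
    refine Submodule.eq_of_le_of_finrank_le ?_ ?_
    · rintro _ ⟨v, rfl⟩
      simp [Matrix.mulVec_mulVec, hPQ]
    · have := P.mulVecLin.finrank_range_add_finrank_ker
      simp only [Module.finrank_fin_fun] at this
      change _ ≤ Q.rank
      change P.rank + _ = _ at this
      omega
  -- a generalized inverse `B` of `P`: a section over the range of `P`, extended to all of `K^a`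
  obtain ⟨g, hg⟩ := P.mulVecLin.rangeRestrict.exists_rightInverse_of_surjective
    (LinearMap.range_rangeRestrict _)
  obtain ⟨B, hB⟩ := g.exists_extend
  have hPB : ∀ v, P.mulVecLin (B (P.mulVecLin v)) = P.mulVecLin v := by
    intro v
    have h1 := LinearMap.congr_fun hB (P.mulVecLin.rangeRestrict v)
    have h2 := LinearMap.congr_fun hg (P.mulVecLin.rangeRestrict v)
    have h3 : B (P.mulVecLin v) = g (P.mulVecLin.rangeRestrict v) := h1
    rw [h3]
    exact congrArg Subtype.val h2
  have hA : ∀ v, ∃ w, Q.mulVecLin w = v - B (P.mulVecLin v) := by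
    intro v
    have : v - B (P.mulVecLin v) ∈ LinearMap.range Q.mulVecLin := by
      rw [hrange, LinearMap.mem_ker, map_sub, hPB, sub_self]
    exact this
  choose w hw using hA
  refine ⟨Matrix.of fun i j => w (Pi.single j 1) i, LinearMap.toMatrix' B, ?_⟩
  ext i j
  have h1 := congrFun (hw (Pi.single j 1)) i
  have h2 : (LinearMap.toMatrix' B * P) i j = B (P.mulVecLin (Pi.single j 1)) i := by
    have : LinearMap.toMatrix' (B.comp P.mulVecLin) = LinearMap.toMatrix' B * P := by
      rw [LinearMap.toMatrix'_comp, ← Matrix.toLin'_apply', LinearMap.toMatrix'_toLin']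
    rw [← this, LinearMap.toMatrix'_apply]
    rfl
  have h3 : (Q * Matrix.of fun i j => w (Pi.single j 1) i) i j
      = Q.mulVecLin (w (Pi.single j 1)) i := by
    simp [Matrix.mul_apply, Matrix.mulVec, dotProduct]
  rw [Matrix.add_apply, h2, h3, h1]
  simp [Matrix.one_apply, Pi.single_apply]

lemma exists_clear_denominators {R : Type*} [CommRing R] (p : Ideal R) [p.IsPrime] {a b : ℕ}
    (A : Matrix (Fin a) (Fin b) (FractionRing (R ⧸ p))) :
    ∃ s ∉ p, ∃ A' : Matrix (Fin a) (Fin b) R,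
      A'.map (algebraMap R (FractionRing (R ⧸ p))) =
        algebraMap R (FractionRing (R ⧸ p)) s • A := by
  obtain ⟨⟨t, ht⟩, h⟩ := IsLocalization.exist_integer_multiples_of_finite
    (nonZeroDivisors (R ⧸ p)) (fun x : Fin a × Fin b => A x.1 x.2)
  obtain ⟨s, rfl⟩ := Ideal.Quotient.mk_surjective t
  choose y hy using h
  choose z hz using fun x => Ideal.Quotient.mk_surjective (y x)
  refine ⟨s, ?_, Matrix.of fun i j => z (i, j), ?_⟩
  · intro hs
    rw [Ideal.Quotient.eq_zero_iff_mem.mpr hs] at ht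
    exact zero_notMem_nonZeroDivisors ht
  · ext i j
    have := hy (i, j)
    rw [← hz] at this
    simp only [Matrix.map_apply, Matrix.of_apply, Matrix.smul_apply, smul_eq_mul]
    rw [IsScalarTower.algebraMap_apply R (R ⧸ p), IsScalarTower.algebraMap_apply R (R ⧸ p) _ s]
    rw [Algebra.smul_def] at this
    exact this

lemma algebraMap_fractionRing_eq_zero {R : Type*} [CommRing R] (p : Ideal R) [p.IsPrime] {x : R} :
    algebraMap R (FractionRing (R ⧸ p)) x = 0 ↔ x ∈ p := by
  rw [IsScalarTower.algebraMap_apply R (R ⧸ p),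
    FaithfulSMul.algebraMap_eq_zero_iff]
  exact Ideal.Quotient.eq_zero_iff_mem

/-- Non-membership of the jump ideal in `p` gives a contraction of the complex over the residue
field `Frac (R ⧸ p)`; after clearing denominators it lifts to `R`, and the lifted endomorphism
`Q A + B P` is invertible modulo `p` up to localization. -/
lemma exists_split_of_minorsIdeal {R : Type*} [CommRing R] (p : Ideal R) [p.IsPrime] {a b c : ℕ}
    (P : Matrix (Fin a) (Fin b) R) (Q : Matrix (Fin b) (Fin c) R) (hPQ : P * Q = 0)
    (hm : ¬ minorsIdeal b (Matrix.fromBlocks Q 0 0 P) ≤ p) :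
    ∃ (A : Matrix (Fin c) (Fin b) R) (B : Matrix (Fin b) (Fin a) R),
      (Q * A + B * P).det ∉ p := by
  set K := FractionRing (R ⧸ p)
  set φ := algebraMap R K
  have hr : b ≤ (Q.map φ).rank + (P.map φ).rank := by
    rw [minorsIdeal, Ideal.span_le, Set.not_subset] at hm
    obtain ⟨_, ⟨f, g, rfl⟩, hx⟩ := hm
    refine le_trans ?_ (rank_fromBlocks_diag_le _ _)
    have h0 : φ ((Matrix.fromBlocks Q 0 0 P).submatrix f g).det ≠ 0 := fun h =>
      hx ((algebraMap_fractionRing_eq_zero p).mp h)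
    rw [RingHom.map_det] at h0
    have h1 := Matrix.rank_of_det_ne_zero h0
    have h2 : φ.mapMatrix ((Matrix.fromBlocks Q 0 0 P).submatrix f g) =
        (Matrix.fromBlocks (Q.map φ) 0 0 (P.map φ)).submatrix f g := by
      ext i j
      simp only [RingHom.mapMatrix_apply, Matrix.map_apply, Matrix.submatrix_apply]
      rcases f i with x | x <;> rcases g j with y | y <;> simp
    rw [h2, Fintype.card_fin] at h1
    exact h1.symm.trans_le (Matrix.rank_submatrix_le _ _ _)
  obtain ⟨A, B, hAB⟩ := exists_split_of_rank (P.map φ) (Q.map φ)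
    (by rw [← Matrix.map_mul, hPQ]; simp) hr
  obtain ⟨s, hs, A', hA'⟩ := exists_clear_denominators p A
  obtain ⟨t, ht, B', hB'⟩ := exists_clear_denominators p B
  refine ⟨t • A', s • B', ?_⟩
  rw [← algebraMap_fractionRing_eq_zero p, RingHom.map_det]
  have h : φ.mapMatrix (Q * t • A' + s • B' * P) =
      φ (s * t) • (1 : Matrix (Fin b) (Fin b) K) := by
    have e1 : (t • A').map φ = φ t • φ s • A := by
      rw [← hA']; ext i j; simp only [Matrix.map_apply, Matrix.smul_apply, smul_eq_mul, map_mul]; rfl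
    have e2 : (s • B').map φ = φ s • φ t • B := by
      rw [← hB']; ext i j; simp only [Matrix.map_apply, Matrix.smul_apply, smul_eq_mul, map_mul]; rfl
    rw [← hAB, map_add, RingHom.mapMatrix_apply, RingHom.mapMatrix_apply, Matrix.map_mul,
      Matrix.map_mul, e1, e2]
    simp only [Matrix.mul_smul, Matrix.smul_mul, smul_add, map_mul, mul_smul]
    rw [smul_comm (φ t) (φ s)]
  rw [h, Matrix.det_smul, Matrix.det_one, mul_one]
  refine pow_ne_zero _ fun h => ?_
  rcases (Ideal.IsPrime.mem_or_mem ‹_› ((algebraMap_fractionRing_eq_zero p).mp h)) with h | h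
  exacts [hs h, ht h]

open Polynomial in
/-- Up to an element `δ ∉ p`, the matrix `P` has a generalized inverse, so that its cokernel becomes
projective over the localization at `p`. With `U = Q A + B P` one has `P U = (P B) P`, hence
`P q(U) = q(P B) P` for every polynomial `q`; Cayley–Hamilton for `U` then expresses
`± det U • P` as `P * E * P`. -/
lemma exists_quasiInverse {R : Type*} [CommRing R] (p : Ideal R) {a b c : ℕ}
    (P : Matrix (Fin a) (Fin b) R) (Q : Matrix (Fin b) (Fin c) R) (hPQ : P * Q = 0)
    (A : Matrix (Fin c) (Fin b) R) (B : Matrix (Fin b) (Fin a) R)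
    (hdet : (Q * A + B * P).det ∉ p) :
    ∃ (E : Matrix (Fin b) (Fin a) R), ∃ δ ∉ p, P * E * P = δ • P := by
  set U := Q * A + B * P
  have hPU : P * U = (P * B) * P := by
    rw [Matrix.mul_add, ← Matrix.mul_assoc, hPQ, Matrix.zero_mul, zero_add, Matrix.mul_assoc]
  have hpoly : ∀ q : R[X], P * aeval U q = aeval (P * B) q * P := by
    intro q
    induction q using Polynomial.induction_on' with
    | add f g hf hg => simp only [map_add, Matrix.mul_add, Matrix.add_mul, hf, hg]
    | monomial n r =>
      have : P * U ^ n = (P * B) ^ n * P := by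
        induction n with
        | zero => simp
        | succ n ih => rw [pow_succ, pow_succ, ← Matrix.mul_assoc, ih, Matrix.mul_assoc, hPU,
            ← Matrix.mul_assoc, Matrix.mul_assoc]
      simp only [aeval_monomial, ← Algebra.smul_def, Matrix.mul_smul, Matrix.smul_mul, this]
  have h := hpoly U.charpoly
  rw [Matrix.aeval_self_charpoly, Matrix.mul_zero] at h
  nth_rewrite 1 [← Polynomial.X_mul_divX_add U.charpoly] at h
  refine ⟨B * aeval (P * B) U.charpoly.divX, -U.charpoly.coeff 0, ?_, ?_⟩
  · intro hc
    apply hdet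
    rw [Matrix.det_eq_sign_charpoly_coeff]
    exact Ideal.mul_mem_left _ _ (by simpa using hc)
  · simp only [map_add, map_mul, aeval_X, aeval_C, Matrix.add_mul] at h
    rw [← Matrix.mul_assoc, neg_smul, eq_neg_iff_add_eq_zero, h]
    congr 1
    rw [Algebra.algebraMap_eq_smul_one, Matrix.smul_mul, Matrix.one_mul]

/-! ### Annihilation of Ext modules -/

/-- One step of dimension shifting: the long exact sequence transfers annihilation by `s` from
`Ext^{i+1}(X, S₁)` to `Ext^i(X, S₃)`, with the same `s`, when `Ext^i(X, S₂) = 0`. -/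
lemma ext_step {R : Type*} [CommRing R] {X : ModuleCat R} (S : ShortComplex (ModuleCat R))
    (hS : S.ShortExact) (i : ℕ) [Subsingleton (Ext X S.X₂ i)] (s : R)
    (h1 : ∀ x : Ext X S.X₁ (i + 1), s • x = 0) (x : Ext X S.X₃ i) : s • x = 0 := by
  obtain ⟨y, hy⟩ := Ext.covariant_sequence_exact₃ X hS (s • x) rfl
    (by rw [Ext.smul_comp]; exact h1 _)
  rw [← hy, Subsingleton.elim y 0, Ext.zero_comp]

lemma ext_smul_eq_zero_of_factor {R : Type*} [CommRing R] {X Y F : ModuleCat R} (i : ℕ)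
    [Subsingleton (Ext X F i)] (s : R) (f : Y ⟶ F) (g : F ⟶ Y) (h : f ≫ g = s • 𝟙 Y)
    (x : Ext X Y i) : s • x = 0 := by
  rw [Ext.smul_eq_comp_mk₀, ← h, ← Ext.mk₀_comp_mk₀, ← Ext.comp_assoc_of_second_deg_zero,
    Subsingleton.elim (x.comp (Ext.mk₀ f) (add_zero i)) 0, Ext.zero_comp]

/-! ### The zeroth Fitting ideal and the annihilator -/

/-- The zeroth Fitting ideal annihilates the cokernel (Cramer's rule). -/
lemma fitting_le_annihilator {R : Type*} [CommRing R] {a b : ℕ} (P : Matrix (Fin a) (Fin b) R) :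
    minorsIdeal a P ≤ Module.annihilator R ((Fin a → R) ⧸ LinearMap.range P.mulVecLin) := by
  rw [minorsIdeal, Ideal.span_le]
  rintro _ ⟨f, g, rfl⟩
  rw [SetLike.mem_coe, Module.mem_annihilator]
  intro m
  obtain ⟨v, rfl⟩ := Submodule.mkQ_surjective _ m
  rw [← map_smul, Submodule.mkQ_apply, Submodule.Quotient.mk_eq_zero]
  by_cases hf : Function.Injective f
  · have hfb := Finite.injective_iff_bijective.mp hf
    let w := (P.submatrix f g).adjugate.mulVec (v ∘ f)
    refine ⟨fun j => ∑ k, if g k = j then w k else 0, ?_⟩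
    ext i
    obtain ⟨i, rfl⟩ := hfb.2 i
    have h : (P.submatrix f g).mulVec w i = (P.submatrix f g).det * v (f i) := by
      simp only [w, Matrix.mulVec_mulVec, Matrix.mul_adjugate, Matrix.smul_mulVec,
        Matrix.one_mulVec]
      rfl
    rw [Pi.smul_apply, smul_eq_mul, ← h]
    simp only [Matrix.mulVecLin_apply, Matrix.mulVec, dotProduct, Finset.mul_sum,
      Matrix.submatrix_apply]
    rw [Finset.sum_comm]
    simp
  · have : (P.submatrix f g).det = 0 := by
      rw [Function.Injective] at hf
      push Not at hf
      obtain ⟨i, j, hij, hne⟩ := hf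
      exact Matrix.det_zero_of_row_eq hne (by ext k; simp [hij])
    rw [this, zero_smul]
    exact zero_mem _

/-- If `x` annihilates the cokernel of `P`, then `x • 1` factors through `P`, and expanding its
determinant `x ^ a` multilinearly expresses it by the maximal minors of `P`. -/
lemma annihilator_pow_mem_fitting {R : Type*} [CommRing R] {a b : ℕ}
    (P : Matrix (Fin a) (Fin b) R) (x : R)
    (hx : x ∈ Module.annihilator R ((Fin a → R) ⧸ LinearMap.range P.mulVecLin)) :
    x ^ a ∈ minorsIdeal a P := by
  rw [Module.mem_annihilator] at hx
  have h : ∀ v : Fin a → R, ∃ w, P.mulVecLin w = x • v := by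
    intro v
    have := hx (Submodule.mkQ _ v)
    rw [← map_smul, Submodule.mkQ_apply, Submodule.Quotient.mk_eq_zero] at this
    exact this
  choose w hw using h
  have hd : x ^ a = ((x • (1 : Matrix (Fin a) (Fin a) R))ᵀ).det := by
    rw [Matrix.det_transpose, Matrix.det_smul]; simp
  have hrow : (x • (1 : Matrix (Fin a) (Fin a) R))ᵀ =
      fun j => ∑ k, w (Pi.single j 1) k • (fun i => P i k) := by
    ext j i
    have := congrFun (hw (Pi.single j 1)) i
    simp only [Matrix.mulVecLin_apply, Matrix.mulVec, dotProduct] at this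
    simp only [Finset.sum_apply, Pi.smul_apply, smul_eq_mul]
    rw [Finset.sum_congr rfl fun k _ => mul_comm (w (Pi.single j 1) k) (P i k), this]
    simp [Matrix.one_apply, Pi.single_apply]
  rw [hd, hrow]
  change Matrix.detRowAlternating.toMultilinearMap _ ∈ _
  rw [MultilinearMap.map_sum]
  refine Ideal.sum_mem _ fun g _ => ?_
  rw [MultilinearMap.map_smul_univ]
  refine Ideal.mul_mem_left _ _ (Ideal.subset_span ⟨id, g, ?_⟩)
  rw [← Matrix.det_transpose]
  rfl

lemma mem_minimalPrimes_annihilator {R : Type*} [CommRing R] {a b : ℕ}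
    (P : Matrix (Fin a) (Fin b) R) {p : Ideal R} (hp : p ∈ (minorsIdeal a P).minimalPrimes) :
    p ∈ (Module.annihilator R ((Fin a → R) ⧸ LinearMap.range P.mulVecLin)).minimalPrimes := by
  have := hp.1.1
  refine ⟨⟨this, fun x hx => this.mem_of_pow_mem a (hp.1.2 (annihilator_pow_mem_fitting P x hx))⟩,
    fun q hq hqp => hp.2 ⟨hq.1, (fitting_le_annihilator P).trans hq.2⟩ hqp⟩


/-! ### Height and depth -/

lemma idealHeight_eq_height {R : Type*} [CommRing R] (p : Ideal R) (hp : p.IsPrime) :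
    idealHeight R p = p.height := by
  rw [PrimeSpectrum.height_eq_orderHeight ⟨p, hp⟩]
  refine le_antisymm (iInf₂_le (⟨p, hp⟩ : PrimeSpectrum R) le_rfl) (le_iInf₂ fun q hq => ?_)
  exact Order.height_mono hq

lemma idealHeight_mono {R : Type*} [CommRing R] {I J : Ideal R} (h : I ≤ J) :
    idealHeight R I ≤ idealHeight R J :=
  le_iInf₂ fun q hq => iInf₂_le q (h.trans hq)

lemma exists_regular_of_depth {R : Type*} [CommRing R] {I : Ideal R} {n : ℕ} (hn : 0 < n)
    (h : idealDepth R I = n) :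
    ∃ rs : List R, n ≤ rs.length ∧ (∀ x ∈ rs, x ∈ I) ∧ RingTheory.Sequence.IsRegular R rs := by
  have h1 : ((n - 1 : ℕ) : ℕ∞) < idealDepth R I := by
    rw [h]; exact_mod_cast Nat.sub_lt hn one_pos
  obtain ⟨_, ⟨rs, rfl, hrs⟩, hlt⟩ := lt_sSup_iff.mp h1
  refine ⟨rs, ?_, hrs⟩
  have : n - 1 < rs.length := by exact_mod_cast hlt
  omega

/-! ### Syzygies of the resolution and Ext from `R/p` -/

/-- Rees' theorem for a finite free module: `Ext^i(R/p, R^m)` vanishes below the length of a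
regular sequence in `p`. -/
lemma subsingleton_ext_quotient {R : Type*} [CommRing R] [IsNoetherianRing R] (p : Ideal R)
    (hp : p ≠ ⊤) (rs : List R) (hrs : ∀ x ∈ rs, x ∈ p) (hreg : RingTheory.Sequence.IsRegular R rs)
    (m i : ℕ) (hi : i < rs.length) :
    Subsingleton (Ext (ModuleCat.of R (R ⧸ p)) (ModuleCat.of R (Fin m → R)) i) := by
  have h1 : Subsingleton (Ext (ModuleCat.of R (R ⧸ p)) (ModuleCat.of R R) i) := by
    refine ModuleCat.subsingleton_ext_of_exists_isRegular p (ModuleCat.of R (R ⧸ p)) ?_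
      (ModuleCat.of R R) ?_ rs hrs hreg i hi
    · change Module.support R (R ⧸ p) ⊆ _
      rw [Module.support_eq_zeroLocus, Ideal.annihilator_quotient]
    · change p • (⊤ : Submodule R R) < ⊤
      rw [smul_eq_mul, Ideal.mul_top]
      exact hp.lt_top
  have h2 : 𝟙 (ModuleCat.of R (Fin m → R)) =
      ∑ j, ModuleCat.ofHom (LinearMap.proj j : (Fin m → R) →ₗ[R] R) ≫
        ModuleCat.ofHom (LinearMap.single R (fun _ : Fin m => R) j) := by
    ext v j
    simp [ModuleCat.hom_sum, Pi.single_apply]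
  refine subsingleton_of_forall_eq 0 fun x => ?_
  rw [← Ext.comp_mk₀_id x, h2, Ext.mk₀_sum, Ext.comp_sum]
  refine Finset.sum_eq_zero fun j _ => ?_
  rw [← Ext.mk₀_comp_mk₀, ← Ext.comp_assoc_of_second_deg_zero,
    Subsingleton.elim (x.comp (Ext.mk₀ (ModuleCat.ofHom _)) (add_zero i)) 0, Ext.zero_comp]

/-- For `R^c → R^b → R^a` given by `Q` and `P` and exact at `R^b`, the short complex
`0 → coker Q → R^a → coker P → 0`. The syzygy `im P` is encoded as the isomorphic module
`coker Q`. -/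
noncomputable abbrev syzygyShortComplex {R : Type*} [CommRing R] {a b c : ℕ}
    (P : Matrix (Fin a) (Fin b) R) (Q : Matrix (Fin b) (Fin c) R)
    (h : LinearMap.ker P.mulVecLin = LinearMap.range Q.mulVecLin) :
    ShortComplex (ModuleCat R) where
  X₁ := ModuleCat.of R ((Fin b → R) ⧸ LinearMap.range Q.mulVecLin)
  X₂ := ModuleCat.of R (Fin a → R)
  X₃ := ModuleCat.of R ((Fin a → R) ⧸ LinearMap.range P.mulVecLin)
  f := ModuleCat.ofHom ((LinearMap.range Q.mulVecLin).liftQ P.mulVecLin h.ge)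
  g := ModuleCat.ofHom (LinearMap.range P.mulVecLin).mkQ
  zero := by
    ext v
    simpa using ⟨_, P.mulVec_single_one v⟩

lemma syzygyShortComplex_shortExact {R : Type*} [CommRing R] {a b c : ℕ}
    (P : Matrix (Fin a) (Fin b) R) (Q : Matrix (Fin b) (Fin c) R)
    (h : LinearMap.ker P.mulVecLin = LinearMap.range Q.mulVecLin) :
    (syzygyShortComplex P Q h).ShortExact where
  exact := by
    rw [ShortComplex.moduleCat_exact_iff_range_eq_ker]
    simp [Submodule.range_liftQ]
  mono_f := by
    rw [ModuleCat.mono_iff_injective]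
    change Function.Injective ((LinearMap.range Q.mulVecLin).liftQ P.mulVecLin h.ge)
    rw [← LinearMap.ker_eq_bot]
    exact Submodule.ker_liftQ_eq_bot _ _ _ h.le
  epi_g := by
    rw [ModuleCat.epi_iff_surjective]
    exact Submodule.mkQ_surjective _

/-- The relation `P E P = δ P` makes multiplication by `δ` on `coker P` factor through the free
module `R^a`, via the map induced by `δ - P E`. -/
lemma ext_coker_smul_eq_zero {R : Type*} [CommRing R] {a b : ℕ} (X : ModuleCat R)
    (P : Matrix (Fin a) (Fin b) R) (E : Matrix (Fin b) (Fin a) R) (δ : R)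
    (hE : P * E * P = δ • P) (i : ℕ) [Subsingleton (Ext X (ModuleCat.of R (Fin a → R)) i)]
    (x : Ext X (ModuleCat.of R ((Fin a → R) ⧸ LinearMap.range P.mulVecLin)) i) : δ • x = 0 := by
  have hσ : LinearMap.range P.mulVecLin ≤
      LinearMap.ker (δ • LinearMap.id - (P * E).mulVecLin) := by
    rintro _ ⟨v, rfl⟩
    simp only [LinearMap.mem_ker, LinearMap.sub_apply, LinearMap.smul_apply, LinearMap.id_apply,
      Matrix.mulVecLin_apply, Matrix.mulVec_mulVec, hE, Matrix.smul_mulVec, sub_self]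
  refine ext_smul_eq_zero_of_factor i δ
    (ModuleCat.ofHom ((LinearMap.range P.mulVecLin).liftQ _ hσ))
    (ModuleCat.ofHom (LinearMap.range P.mulVecLin).mkQ) ?_ x
  refine ModuleCat.hom_ext (Submodule.linearMap_qext _ (LinearMap.ext fun v => ?_))
  have h0 : (LinearMap.range P.mulVecLin).mkQ ((P * E).mulVecLin v) = 0 := by
    rw [Submodule.mkQ_apply, Submodule.Quotient.mk_eq_zero]
    exact ⟨E.mulVec v, by simp [Matrix.mulVec_mulVec]⟩
  change (LinearMap.range P.mulVecLin).mkQ (δ • v - (P * E).mulVecLin v) =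
    δ • (LinearMap.range P.mulVecLin).mkQ v
  rw [map_sub, h0, sub_zero, map_smul]

/-- A minimal prime `p` of `J^0` of grade at least `n + 1` contains `J^{-(n+1)}`. Locally at `p`,
this is the Auslander–Buchsbaum equality for the nonzero finite length module `coker (D 0)`. -/
lemma jumpIdeal_le_of_mem_minimalPrimes {R : Type*} [CommRing R] [IsNoetherianRing R]
    (r : ℕ → ℕ) (D : ∀ i : ℕ, Matrix (Fin (r i)) (Fin (r (i + 1))) R)
    (hexact : ∀ i : ℕ, LinearMap.ker (Matrix.mulVecLin (D i)) =
      LinearMap.range (Matrix.mulVecLin (D (i + 1))))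
    {p : Ideal R} (hp : p ∈ (jumpIdeal r D 0).minimalPrimes) (rs : List R)
    (hrs : ∀ x ∈ rs, x ∈ p) (hreg : RingTheory.Sequence.IsRegular R rs) (n : ℕ)
    (hn : n < rs.length) : jumpIdeal r D (n + 1) ≤ p := by
  by_contra hJ
  have hprime : p.IsPrime := hp.1.1
  have hPQ : D n * D (n + 1) = 0 := by
    have h : (D n * D (n + 1)).mulVecLin = 0 := by
      rw [Matrix.mulVecLin_mul]
      exact LinearMap.range_le_ker_iff.mp (hexact n).ge
    rw [← Matrix.toLin'_apply'] at h
    exact (LinearEquiv.map_eq_zero_iff _).mp h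
  obtain ⟨A, B, hdet⟩ := exists_split_of_minorsIdeal p (D n) (D (n + 1)) hPQ hJ
  obtain ⟨E, δ, hδ, hE⟩ := exists_quasiInverse p (D n) (D (n + 1)) hPQ A B hdet
  have hfree : ∀ m i, i ≤ n →
      Subsingleton (Ext (ModuleCat.of R (R ⧸ p)) (ModuleCat.of R (Fin m → R)) i) :=
    fun m i hi => subsingleton_ext_quotient p hprime.ne_top rs hrs hreg m i (by omega)
  -- downward along the syzygies, starting from `coker (D n)`
  have key : ∀ j i, i + j = n → ∀ x : Ext (ModuleCat.of R (R ⧸ p))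
      (ModuleCat.of R ((Fin (r i) → R) ⧸ LinearMap.range (D i).mulVecLin)) i, δ • x = 0 := by
    intro j
    induction j with
    | zero =>
      rintro i rfl
      have := hfree (r i) i le_rfl
      exact ext_coker_smul_eq_zero _ (D i) E δ hE i
    | succ j ih =>
      intro i hi
      have := hfree (r i) i (by omega)
      exact ext_step _ (syzygyShortComplex_shortExact (D i) (D (i + 1)) (hexact i)) i δ
        (ih (i + 1) (by omega))
  -- `R ⧸ p` embeds in `coker (D 0)`, although `δ ∉ p` annihilates all maps between them
  have hass := Module.associatedPrimes.minimalPrimes_annihilator_subset_associatedPrimes R _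
    (mem_minimalPrimes_annihilator (D 0) hp)
  obtain ⟨-, y, hy⟩ := isAssociatedPrime_iff.mp (AssociatedPrimes.mem_iff.mp hass)
  have hy' : ∀ s, s ∈ p ↔ s • y = 0 := by
    intro s
    nth_rewrite 1 [hy]
    simp [Submodule.mem_colon_singleton]
  let f : (R ⧸ p) →ₗ[R] ((Fin (r 0) → R) ⧸ LinearMap.range (D 0).mulVecLin) :=
    Submodule.liftQ p (LinearMap.toSpanSingleton R _ y) fun s hs => by
      simpa using (hy' s).mp hs
  have h0 := key n 0 (by omega) (Ext.mk₀ (ModuleCat.ofHom f))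
  rw [← Ext.mk₀_smul, Ext.mk₀_eq_zero_iff] at h0
  have h1 : δ • f (Submodule.Quotient.mk 1) = 0 := by
    have := congrArg (fun g => g.hom (Submodule.Quotient.mk (p := p) 1)) h0
    exact this
  apply hδ
  rw [hy']
  have hf : f (Submodule.Quotient.mk 1) = y :=
    (Submodule.liftQ_apply _ _ _).trans (one_smul R y)
  rwa [hf] at h1

theorem statement_6
    (R : Type*) [CommRing R] [IsDomain R] [IsNoetherianRing R]
    (hCM : IsCohenMacaulayRing R)
    (M : Type*) [AddCommGroup M] [Module R M] [Nontrivial M]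
    (r : ℕ → ℕ) (l : ℕ) (hbd : ∀ i : ℕ, l < i → r i = 0)
    (D : ∀ i : ℕ, Matrix (Fin (r i)) (Fin (r (i + 1))) R)
    (π : (Fin (r 0) → R) →ₗ[R] M) (hπ : Function.Surjective π)
    (hker : LinearMap.ker π = LinearMap.range (Matrix.mulVecLin (D 0)))
    (hexact : ∀ i : ℕ, LinearMap.ker (Matrix.mulVecLin (D i)) =
      LinearMap.range (Matrix.mulVecLin (D (i + 1)))) :
    ∀ d : ℕ, idealHeight R (jumpIdeal r D 0) = (d : ℕ∞) →
      (∀ k : ℕ, d < k → (k : ℕ∞) < idealHeight R (jumpIdeal r D k)) →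
      ∀ p ∈ (jumpIdeal r D 0).minimalPrimes, idealHeight R p = (d : ℕ∞) := by
  intro d hd hk p hp
  have hprime : p.IsPrime := hp.1.1
  have hge : (d : ℕ∞) ≤ idealHeight R p := hd ▸ idealHeight_mono hp.1.2
  obtain ⟨h, hh⟩ : ∃ h : ℕ, idealHeight R p = h := by
    rw [idealHeight_eq_height p hprime]
    exact ⟨_, (ENat.natCast_toNat (Ideal.height_ne_top hprime.ne_top)).symm⟩
  by_contra hne
  have hlt : d < h := by
    have h1 := lt_of_le_of_ne hge (Ne.symm hne)
    rw [hh] at h1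
    exact_mod_cast h1
  obtain ⟨n, rfl⟩ : ∃ n, h = n + 1 := ⟨h - 1, by omega⟩
  obtain ⟨rs, hlen, hrs, hreg⟩ := exists_regular_of_depth (Nat.succ_pos n)
    ((hCM p hprime.ne_top).trans hh)
  have hle := jumpIdeal_le_of_mem_minimalPrimes r D hexact hp rs hrs hreg n hlen
  exact absurd (idealHeight_mono hle) (not_le.mpr (hh ▸ hk (n + 1) hlt))
end

section
/- (Signed Euler characteristic property, algebraic form.) The alternating sum of the ranks of the terms of the finite free resolution of M satisfies Σ_{i=0}^{l} (-1)^{i} rank(F^{-i}) ≥ 0; moreover, equality holds if and only if the annihilator ideal Ann_R(M) is nonzero. -/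
/-!
The alternating sum of ranks equals the rank of `M`, meaning the dimension of `Frac(R) ⊗ M`.
Rank is additive on short exact sequences over a domain, so the partial alternating sum up to
degree `n` is `rank M + (-1)^n rank (im ∂^{-(n+1)})`, and the last image vanishes at `n = l`.
Nonnegativity is then immediate. Rank zero means that `M` is torsion; since `M` is finitely
generated, a product of nonzero annihilators of the generators annihilates `M`, so this is
equivalent to `Ann(M) ≠ 0`.
-/

/-- Rank zero means torsion, and for a finite module over a domain the product of nonzero scalars
killing the individual generators is a single nonzero scalar killing everything. -/
theorem finrank_eq_zero_iff_annihilator_ne_bot {R M : Type*} [CommRing R] [IsDomain R]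
    [AddCommGroup M] [Module R M] [Module.Finite R M] :
    Module.finrank R M = 0 ↔ Module.annihilator R M ≠ ⊥ := by
  rw [Module.finrank_eq_zero_iff, Submodule.ne_bot_iff]
  constructor
  · intro h
    obtain ⟨s, hs⟩ := Module.Finite.fg_top (R := R) (M := M)
    choose a ha0 ha using h
    refine ⟨∏ x ∈ s, a x, Module.mem_annihilator.mpr fun m ↦ ?_,
      Finset.prod_ne_zero_iff.mpr fun x _ ↦ ha0 x⟩
    have hle : Submodule.span R (s : Set M) ≤
        LinearMap.ker (LinearMap.lsmul R M (∏ x ∈ s, a x)) := by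
      rw [Submodule.span_le]
      intro x hx
      have : (∏ x ∈ s, a x) • x = 0 := by
        classical
        rw [← Finset.prod_erase_mul s a hx, mul_smul, ha, smul_zero]
      simpa using this
    have hm : m ∈ Submodule.span R (s : Set M) := hs ▸ Submodule.mem_top
    simpa using hle hm
  · rintro ⟨a, ha, ha0⟩ m
    exact ⟨a, ha0, Module.mem_annihilator.mp ha m⟩


theorem statement_8
    (R : Type*) [CommRing R] [IsDomain R] [IsNoetherianRing R]
    (hCM : IsCohenMacaulayRing R)
    (M : Type*) [AddCommGroup M] [Module R M] [Nontrivial M]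
    (r : ℕ → ℕ) (l : ℕ) (hbd : ∀ i : ℕ, l < i → r i = 0)
    (D : ∀ i : ℕ, Matrix (Fin (r i)) (Fin (r (i + 1))) R)
    (π : (Fin (r 0) → R) →ₗ[R] M) (hπ : Function.Surjective π)
    (hker : LinearMap.ker π = LinearMap.range (Matrix.mulVecLin (D 0)))
    (hexact : ∀ i : ℕ, LinearMap.ker (Matrix.mulVecLin (D i)) =
      LinearMap.range (Matrix.mulVecLin (D (i + 1)))) :
    (0 ≤ ∑ i ∈ Finset.range (l + 1), (-1 : ℤ) ^ i * (r i : ℤ)) ∧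
      ((∑ i ∈ Finset.range (l + 1), (-1 : ℤ) ^ i * (r i : ℤ)) = 0 ↔
        Module.annihilator R M ≠ ⊥) := by
  have : Module.Finite R M := Module.Finite.of_surjective π hπ
  have h0 : Module.finrank R M + Module.finrank R (LinearMap.range (D 0).mulVecLin) = r 0 := by
    have h := (LinearMap.ker π).finrank_quotient_add_finrank
    rwa [(π.quotKerEquivOfSurjective hπ).finrank_eq, hker, Module.finrank_fin_fun] at h
  have hs (i : ℕ) : Module.finrank R (LinearMap.range (D i).mulVecLin) +
      Module.finrank R (LinearMap.range (D (i + 1)).mulVecLin) = r (i + 1) := by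
    have h := (LinearMap.ker (D i).mulVecLin).finrank_quotient_add_finrank
    rwa [(D i).mulVecLin.quotKerEquivRange.finrank_eq, hexact, Module.finrank_fin_fun] at h
  have hsum (n : ℕ) : ∑ i ∈ Finset.range (n + 1), (-1 : ℤ) ^ i * (r i : ℤ) =
      Module.finrank R M +
        (-1) ^ n * (Module.finrank R (LinearMap.range (D n).mulVecLin) : ℤ) := by
    induction n with
    | zero => simp [← h0]
    | succ n ih =>
      have h := congrArg (Nat.cast : ℕ → ℤ) (hs n)
      push_cast at h
      rw [Finset.sum_range_succ, ih]
      linear_combination (-(-1 : ℤ) ^ (n + 1)) * h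
  have hl : Module.finrank R (LinearMap.range (D l).mulVecLin) = 0 := by
    have h := hs l
    have hr := hbd (l + 1) l.lt_succ_self
    omega
  have key : ∑ i ∈ Finset.range (l + 1), (-1 : ℤ) ^ i * (r i : ℤ) = Module.finrank R M := by
    simp [hsum l, hl]
  rw [key]
  exact ⟨Int.natCast_nonneg _, by
    rw [Nat.cast_eq_zero, finrank_eq_zero_iff_annihilator_ne_bot]⟩
end

section
/- Let G' be a finitely generated free abelian group and let N^{•} be a bounded cochain complex of finitely generated free Z[G']-modules. Fix an integer n. Suppose that H^{i}(N^{•} ⊗_Z Q) = 0 for all i ≠ n, and that for every prime number p one has H^{i}(N^{•} ⊗_Z F_p) = 0 for all i ≠ n. Then H^{i}(N^{•}) = 0 for all i ≠ n, and H^{n}(N^{•}) is a torsion-free Z-module. -/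
/-!
Write `H^i` for the cohomology of `N^•`. Each `N i` is torsion-free over `ℤ`, so everything follows
from the universal coefficient sequences, used here elementwise. Acyclicity of `N^• ⊗ ℚ` in degree
`i` makes `H^i` a torsion group (`exists_smul_mem_range`). Acyclicity of `N^• ⊗ 𝔽_p` in degree `i`
says that a cocycle modulo `p` is a coboundary modulo `p` (`exists_eq_add_smul`); hence
`H^i / p = 0` (`exists_cocycle_decomposition`) and `H^{i+1}` has no `p`-torsion
(`mem_range_of_smul_mem_range`).

So `H^i` is torsion-free for `i ≠ n + 1`, and it is also torsion, hence zero, for `i ≠ n, n + 1`.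
The remaining group `H^{n+1}` is torsion and divisible by every prime. As `ℤ[G']` is Noetherian,
`H^{n+1}` is finitely generated, so a single nonzero integer `m` kills it
(`exists_uniform_smul_le`), and `H^{n+1} = m H^{n+1} = 0`.
-/

/-!
Context: `G'` is a finitely generated free abelian group and `N^•` is a bounded cochain complex
of finitely generated free modules over the integral group ring `ℤ[G'] = AddMonoidAlgebra ℤ G'`.
The complex is encoded by a family of modules `N i` (for `i : ℤ`) with differentials
`d i : N i → N (i+1)` satisfying `d (i+1) ∘ d i = 0` and vanishing outside a bounded range.
The cohomology `H^i(N^•)` is `ker (d i) / imageAt d i`, so vanishing of `H^i` is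
`ker (d i) ≤ imageAt d i`, and statements about torsion of `H^i` are phrased elementwise on
`ker (d i)` modulo `imageAt d i`.  The complex `N^• ⊗_ℤ k` has differentials `tensorDiff d k`.
-/

open TensorProduct

/-- Cast between terms of a family of modules along an equality of indices. -/
def complexCast {S : Type*} [Semiring S] {C : ℤ → Type*} [∀ i, AddCommMonoid (C i)]
    [∀ i, Module S (C i)] {i j : ℤ} (h : i = j) : C i →ₗ[S] C j := by
  subst h; exact LinearMap.id

/-- The image of the incoming differential `∂^{n-1} : C^{n-1} → C^n` of a cochain complex,
as a submodule of `C^n`.  The cohomology `H^n` is `ker ∂^n / imageAt d n`. -/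
noncomputable def imageAt {S : Type*} [Semiring S] {C : ℤ → Type*} [∀ i, AddCommMonoid (C i)]
    [∀ i, Module S (C i)] (d : ∀ i : ℤ, C i →ₗ[S] C (i + 1)) (n : ℤ) : Submodule S (C n) :=
  LinearMap.range ((complexCast (show n - 1 + 1 = n by omega)).comp (d (n - 1)))

/-- The differential of the cochain complex `N^• ⊗_ℤ k` obtained by tensoring each term of `N^•`
(with its differentials viewed as `ℤ`-linear maps) with `k` over `ℤ`. -/
noncomputable def tensorDiff {R : Type*} [Ring R] {N : ℤ → Type*} [∀ i, AddCommGroup (N i)]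
    [∀ i, Module R (N i)] (d : ∀ i : ℤ, N i →ₗ[R] N (i + 1)) (k : Type*) [AddCommGroup k]
    (i : ℤ) : (N i ⊗[ℤ] k) →ₗ[ℤ] (N (i + 1) ⊗[ℤ] k) :=
  LinearMap.rTensor k ((d i).toAddMonoidHom.toIntLinearMap)

lemma imageAt_succ {S : Type*} [Semiring S] {C : ℤ → Type*} [∀ i, AddCommMonoid (C i)]
    [∀ i, Module S (C i)] (d : ∀ i : ℤ, C i →ₗ[S] C (i + 1)) (j : ℤ) :
    imageAt d (j + 1) = LinearMap.range (d j) := by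
  have key : ∀ i (h : i + 1 = j + 1),
      LinearMap.range ((complexCast (C := C) (S := S) h).comp (d i)) = LinearMap.range (d j) := by
    intro i h
    obtain rfl : i = j := by omega
    rfl
  exact key _ _

/-- If the complex `A → B → C` becomes exact at `B` after tensoring with `ℚ`, and `B` is
torsion-free, then the cohomology of `A → B → C` at `B` is a torsion group. -/
lemma exists_smul_mem_range {A B C : Type*} [AddCommGroup A] [AddCommGroup B] [AddCommGroup C]
    [Module.Flat ℤ B] (f : A →ₗ[ℤ] B) (g : B →ₗ[ℤ] C)
    (h : LinearMap.ker (g.rTensor ℚ) ≤ LinearMap.range (f.rTensor ℚ))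
    (x : B) (hx : g x = 0) : ∃ m : ℕ, m ≠ 0 ∧ ∃ z, f z = (m : ℤ) • x := by
  have key : ∀ y : A ⊗[ℤ] ℚ, ∃ m : ℕ, m ≠ 0 ∧ ∃ z : A, (m : ℤ) • y = z ⊗ₜ[ℤ] (1 : ℚ) := by
    intro y
    induction y with
    | zero => exact ⟨1, one_ne_zero, 0, by simp⟩
    | tmul a q =>
      refine ⟨q.den, q.den_nz, q.num • a, ?_⟩
      rw [← TensorProduct.tmul_smul, TensorProduct.smul_tmul]
      congr 1
      simp [Rat.den_mul_eq_num]
    | add y₁ y₂ h₁ h₂ =>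
      obtain ⟨m₁, hm₁, z₁, e₁⟩ := h₁
      obtain ⟨m₂, hm₂, z₂, e₂⟩ := h₂
      refine ⟨m₁ * m₂, mul_ne_zero hm₁ hm₂, (m₂ : ℤ) • z₁ + (m₁ : ℤ) • z₂, ?_⟩
      rw [TensorProduct.add_tmul, ← TensorProduct.smul_tmul', ← TensorProduct.smul_tmul',
        ← e₁, ← e₂, smul_smul, smul_smul, smul_add]
      push_cast
      rw [mul_comm (m₂ : ℤ)]
  obtain ⟨y, hy⟩ := h (show x ⊗ₜ[ℤ] (1 : ℚ) ∈ _ by simp [hx])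
  obtain ⟨m, hm, z, e⟩ := key y
  refine ⟨m, hm, z, ?_⟩
  have hinj : Function.Injective (fun b : B => b ⊗ₜ[ℤ] (1 : ℚ)) := by
    have h1 := Module.Flat.lTensor_preserves_injective_linearMap (M := B)
      (Algebra.linearMap ℤ ℚ) (algebraMap ℤ ℚ).injective_int
    have h2 := h1.comp (TensorProduct.rid ℤ B).symm.injective
    intro b c hbc
    apply h2
    simpa using hbc
  apply hinj
  change f z ⊗ₜ[ℤ] (1 : ℚ) = ((m : ℤ) • x) ⊗ₜ[ℤ] (1 : ℚ)
  rw [← TensorProduct.smul_tmul', ← hy, ← map_smul, e, LinearMap.rTensor_tmul]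

lemma exists_eq_smul_of_tmul_one_eq_zero {B : Type*} [AddCommGroup B] (p : ℕ) (x : B)
    (hx : x ⊗ₜ[ℤ] (1 : ZMod p) = 0) : ∃ w, x = (p : ℤ) • w := by
  let π : ℤ →ₗ[ℤ] ZMod p := (Int.castAddHom (ZMod p)).toIntLinearMap
  have hex : Function.Exact (LinearMap.lsmul ℤ ℤ (p : ℤ)) π := by
    intro k
    change ((k : ℤ) : ZMod p) = 0 ↔ _
    rw [ZMod.intCast_zmod_eq_zero_iff_dvd]
    exact ⟨fun ⟨c, hc⟩ => ⟨c, by simp [hc]⟩, fun ⟨c, hc⟩ => ⟨c, by simp [← hc]⟩⟩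
  have h1 := lTensor_exact B hex (ZMod.intCast_surjective)
  obtain ⟨y, hy⟩ := (h1 (x ⊗ₜ[ℤ] (1 : ℤ))).1 (by simpa [π] using hx)
  refine ⟨TensorProduct.rid ℤ B y, ?_⟩
  have h2 : ∀ y : B ⊗[ℤ] ℤ, TensorProduct.rid ℤ B
      ((LinearMap.lsmul ℤ ℤ (p : ℤ)).lTensor B y) = (p : ℤ) • TensorProduct.rid ℤ B y := by
    intro y
    induction y with
    | zero => simp
    | tmul a q => simp [mul_smul]
    | add y₁ y₂ h₁ h₂ => simp only [map_add, h₁, h₂, smul_add]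
  rw [← h2, hy]
  simp

/-- If `A → B → C` becomes exact at `B` after tensoring with `ZMod p`, then every cocycle modulo
`p` in `B` is congruent modulo `p` to a coboundary. -/
lemma exists_eq_add_smul {A B C : Type*} [AddCommGroup A] [AddCommGroup B] [AddCommGroup C]
    (p : ℕ) (f : A →ₗ[ℤ] B) (g : B →ₗ[ℤ] C)
    (h : LinearMap.ker (g.rTensor (ZMod p)) ≤ LinearMap.range (f.rTensor (ZMod p)))
    (x : B) (y : C) (hx : g x = (p : ℤ) • y) : ∃ z w, x = f z + (p : ℤ) • w := by
  have key : ∀ y : A ⊗[ℤ] ZMod p, ∃ z : A, y = z ⊗ₜ[ℤ] (1 : ZMod p) := by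
    intro y
    induction y with
    | zero => exact ⟨0, by simp⟩
    | tmul a q =>
      obtain ⟨k, rfl⟩ := ZMod.intCast_surjective q
      exact ⟨k • a, by rw [TensorProduct.smul_tmul]; simp⟩
    | add y₁ y₂ h₁ h₂ =>
      obtain ⟨z₁, rfl⟩ := h₁
      obtain ⟨z₂, rfl⟩ := h₂
      exact ⟨z₁ + z₂, by rw [TensorProduct.add_tmul]⟩
  have hk : x ⊗ₜ[ℤ] (1 : ZMod p) ∈ LinearMap.ker (g.rTensor (ZMod p)) := by
    rw [LinearMap.mem_ker, LinearMap.rTensor_tmul, hx, TensorProduct.smul_tmul]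
    simp
  obtain ⟨u, hu⟩ := h hk
  obtain ⟨z, rfl⟩ := key u
  obtain ⟨w, hw⟩ := exists_eq_smul_of_tmul_one_eq_zero p (x - f z) (by
    rw [TensorProduct.sub_tmul, ← hu]; simp)
  exact ⟨z, w, by rw [← hw]; abel⟩

/-- If cocycles modulo `p` in `A` are coboundaries modulo `p` for every prime `p`, then the
cohomology of `A → B` at `B` has no torsion. -/
lemma mem_range_of_smul_mem_range {Z A B : Type*} [AddCommGroup Z] [AddCommGroup A]
    [AddCommGroup B] [IsAddTorsionFree B] (e : Z →ₗ[ℤ] A) (f : A →ₗ[ℤ] B) (hfe : ∀ z, f (e z) = 0)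
    (h : ∀ p : ℕ, p.Prime → ∀ x y, f x = (p : ℤ) • y → ∃ z w, x = e z + (p : ℤ) • w)
    (m : ℕ) (hm : m ≠ 0) : ∀ x : B, (∃ z, f z = (m : ℤ) • x) → ∃ z, f z = x := by
  induction m using induction_on_primes with
  | zero => exact absurd rfl hm
  | one => simp
  | prime_mul p a hp ih =>
    rintro x ⟨z, hz⟩
    have ha : a ≠ 0 := right_ne_zero_of_mul hm
    refine ih ha x ?_
    push_cast at hz
    rw [mul_smul] at hz
    obtain ⟨u, v, rfl⟩ := h p hp z _ hz
    refine ⟨v, ?_⟩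
    rw [map_add, hfe, zero_add, map_smul] at hz
    exact zsmul_right_injective (by exact_mod_cast hp.ne_zero) hz

/-- If cocycles modulo `p` in `B` are coboundaries modulo `p` for every prime `p`, then the
cohomology of `A → B → C` at `B` is divisible. -/
lemma exists_cocycle_decomposition {A B C : Type*} [AddCommGroup A] [AddCommGroup B]
    [AddCommGroup C] [IsAddTorsionFree C] (f : A →ₗ[ℤ] B) (g : B →ₗ[ℤ] C)
    (hgf : ∀ z, g (f z) = 0)
    (h : ∀ p : ℕ, p.Prime → ∀ x y, g x = (p : ℤ) • y → ∃ z w, x = f z + (p : ℤ) • w)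
    (m : ℕ) (hm : m ≠ 0) : ∀ x : B, g x = 0 → ∃ z w, g w = 0 ∧ x = f z + (m : ℤ) • w := by
  induction m using induction_on_primes with
  | zero => exact absurd rfl hm
  | one => exact fun x hx => ⟨0, x, hx, by simp⟩
  | prime_mul p a hp ih =>
    intro x hx
    obtain ⟨z, w, hw, rfl⟩ := ih (right_ne_zero_of_mul hm) x hx
    obtain ⟨z', w', rfl⟩ := h p hp w 0 (by simp [hw])
    refine ⟨z + (a : ℤ) • z', w', ?_, ?_⟩
    · rw [map_add, hgf, zero_add, map_smul] at hw
      apply zsmul_right_injective (n := (p : ℤ)) (by exact_mod_cast hp.ne_zero)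
      simpa using hw
    · rw [map_add, map_smul, smul_add, smul_smul]
      push_cast
      rw [mul_comm (p : ℤ), add_assoc]

/-- A finitely generated submodule `K` that is torsion modulo a submodule `I` is annihilated modulo
`I` by a single nonzero integer. -/
lemma exists_uniform_smul_le {R M : Type*} [Ring R] [AddCommGroup M] [Module R M]
    (K I : Submodule R M) (hK : K.FG)
    (h : ∀ x ∈ K, ∃ m : ℕ, m ≠ 0 ∧ (m : ℤ) • x ∈ I) :
    ∃ m : ℕ, m ≠ 0 ∧ ∀ x ∈ K, (m : ℤ) • x ∈ I := by
  obtain ⟨s, rfl⟩ := hK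
  choose! c hc hcI using h
  refine ⟨∏ x ∈ s, c x, Finset.prod_ne_zero_iff.2 fun x hx => hc x (Submodule.subset_span hx), ?_⟩
  intro x hx
  induction hx using Submodule.span_induction with
  | mem x hx =>
    obtain ⟨k, hk⟩ := Finset.dvd_prod_of_mem c hx
    rw [hk, mul_comm]
    push_cast
    rw [mul_smul]
    exact zsmul_mem (hcI x (Submodule.subset_span hx)) _
  | zero => simp
  | add x y _ _ hx hy => rw [smul_add]; exact add_mem hx hy
  | smul r x _ hx => rw [smul_comm]; exact I.smul_mem r hx

lemma isNoetherianRing_int_addMonoidAlgebra (G : Type*) [AddCommGroup G] [Module.Finite ℤ G] :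
    IsNoetherianRing (AddMonoidAlgebra ℤ G) := by
  have : AddMonoid.FG G :=
    AddGroup.fg_iff_addMonoid_fg.1 (Module.Finite.iff_addGroup_fg.1 inferInstance)
  exact Algebra.FiniteType.isNoetherianRing ℤ _

theorem statement_9
    (G' : Type*) [AddCommGroup G'] [Module.Free ℤ G'] [Module.Finite ℤ G']
    (N : ℤ → Type*) [∀ i, AddCommGroup (N i)]
    [∀ i, Module (AddMonoidAlgebra ℤ G') (N i)]
    [∀ i, Module.Free (AddMonoidAlgebra ℤ G') (N i)]
    [∀ i, Module.Finite (AddMonoidAlgebra ℤ G') (N i)]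
    (d : ∀ i : ℤ, N i →ₗ[AddMonoidAlgebra ℤ G'] N (i + 1))
    (hcx : ∀ i : ℤ, (d (i + 1)).comp (d i) = 0)
    (a b : ℤ) (hbdd : ∀ i : ℤ, (i < a ∨ b < i) → Subsingleton (N i))
    (n : ℤ)
    (hQ : ∀ i : ℤ, i ≠ n →
      LinearMap.ker (tensorDiff d ℚ i) ≤ imageAt (tensorDiff d ℚ) i)
    (hFp : ∀ p : ℕ, p.Prime → ∀ i : ℤ, i ≠ n →
      LinearMap.ker (tensorDiff d (ZMod p) i) ≤ imageAt (tensorDiff d (ZMod p)) i) :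
    (∀ i : ℤ, i ≠ n → LinearMap.ker (d i) ≤ imageAt d i) ∧
      (∀ x : N n, x ∈ LinearMap.ker (d n) → ∀ m : ℤ, m ≠ 0 →
        m • x ∈ imageAt d n → x ∈ imageAt d n) := by
  have hNoeth := isNoetherianRing_int_addMonoidAlgebra G'
  have hfreeZ : ∀ i, Module.Free ℤ (N i) := fun i =>
    Module.Free.trans (S := AddMonoidAlgebra ℤ G')
  have htf : ∀ i, IsAddTorsionFree (N i) := fun i =>
    Module.isTorsionFree_int_iff_isAddTorsionFree.1 inferInstance
  let D : ∀ i, N i →ₗ[ℤ] N (i + 1) := fun i => (d i).toAddMonoidHom.toIntLinearMap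
  have hDD : ∀ i z, D (i + 1) (D i z) = 0 := fun i z => LinearMap.congr_fun (hcx i) z
  -- `N^• ⊗ ℚ` acyclic in degree `j + 1` makes `H^{j+1}` torsion.
  have htors : ∀ j, j + 1 ≠ n → ∀ x, d (j + 1) x = 0 →
      ∃ m : ℕ, m ≠ 0 ∧ ∃ z, D j z = (m : ℤ) • x := by
    intro j hj x hx
    have h := hQ (j + 1) hj
    rw [imageAt_succ] at h
    exact exists_smul_mem_range (D j) (D (j + 1)) h x hx
  have hmod : ∀ j, j + 1 ≠ n → ∀ p : ℕ, p.Prime → ∀ x y, D (j + 1) x = (p : ℤ) • y →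
      ∃ z w, x = D j z + (p : ℤ) • w := by
    intro j hj p hp x y hx
    have h := hFp p hp (j + 1) hj
    rw [imageAt_succ] at h
    exact exists_eq_add_smul p (D j) (D (j + 1)) h x y hx
  have hfree : ∀ j, j ≠ n → ∀ m : ℕ, m ≠ 0 → ∀ x, (∃ z, D j z = (m : ℤ) • x) →
      ∃ z, D j z = x := by
    intro j hj m hm
    obtain ⟨k, rfl⟩ : ∃ k, j = k + 1 := ⟨j - 1, by omega⟩
    exact mem_range_of_smul_mem_range (D k) (D (k + 1)) (hDD k) (hmod k hj) m hm
  constructor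
  · intro i hi x hx
    obtain ⟨j, rfl⟩ : ∃ j, i = j + 1 := ⟨i - 1, by omega⟩
    rw [imageAt_succ]
    by_cases hj : j = n
    · subst hj
      obtain ⟨m, hm, hmK⟩ := exists_uniform_smul_le (LinearMap.ker (d (j + 1)))
        (LinearMap.range (d j)) (IsNoetherian.noetherian _) (htors j hi)
      obtain ⟨z, w, hw, rfl⟩ := exists_cocycle_decomposition (D j) (D (j + 1)) (hDD j)
        (hmod j hi) m hm x hx
      exact add_mem ⟨z, rfl⟩ (hmK w hw)
    · obtain ⟨m, hm, hz⟩ := htors j hi x hx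
      exact hfree j hj m hm x hz
  · intro x _ m hm hmx
    obtain ⟨j, rfl⟩ : ∃ j, n = j + 1 := ⟨n - 1, by omega⟩
    rw [imageAt_succ] at hmx ⊢
    refine hfree j (by omega) m.natAbs (by omega) x ?_
    obtain ⟨z, hz⟩ := hmx
    -- `|m|` differs from `m` at most by a sign, which is absorbed into `z`.
    rcases Int.natAbs_eq m with h | h
    · exact ⟨z, by rw [← h]; exact hz⟩
    · refine ⟨-z, ?_⟩
      rw [show (m.natAbs : ℤ) = -m by omega, neg_smul, map_neg]
      exact congrArg _ hz
end
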